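/- Let d ≥ 2 be an integer. There is a constant K > 0 depending only on d such that the following holds. Let t_1, t_{1'}, t_2, t_{2'}, t_0, t_∞ ∈ ℝ satisfy t_1 ≠ t_2; t_0 ∉ {t_∞, t_1, t_{1'}, t_2, t_{2'}}; t_∞ ∉ {t_1, t_2}; and (t_∞ − t_0)(t_1 − t_0)/((t_1 − t_∞)(t_{1'} − t_0)) = (t_∞ − t_0)(t_2 − t_0)/((t_2 − t_∞)(t_{2'} − t_0)). Then every set of lines G (as in the context) satisfies |G|^4 ≤ K · D_{t_1,t_2} · D_{t_0,t_∞} · D_{t_{1'},t_0} · D_{t_{2'},t_0} · m(G) · sup_{t ∈ {t_∞, t_0, t_1, t_{1'}, t_2, t_{2'}}} ℒ^{d−1}(π_t(G))^7. -/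

import Mathlib

open MeasureTheory ENNReal

noncomputable section

/-- `ℝ^{d-1}`, identified with the hyperplane `H` in `ℝ^d`. -/
abbrev Euc (n : ℕ) := EuclideanSpace ℝ (Fin n)

/-- The slice `π_t(G) = {x + tξ : (ξ,x) ∈ G_X}` of a set of lines `G`. -/
def lineSlice {n : ℕ} (G : Set (Euc n × Euc n)) (t : ℝ) : Set (Euc n) :=
  {y | ∃ w ∈ G, y = w.2 + t • w.1}

/-- `m(G) = sup_ξ ℒ^{d-1}({x : (ξ,x) ∈ G_X})`. -/
def mG {n : ℕ} (G : Set (Euc n × Euc n)) : ℝ≥0∞ :=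
  ⨆ ξ : Euc n, volume {x : Euc n | (ξ, x) ∈ G}

/-- `D_{t,t'} = |t - t'|^{-(d-1)}` (as an extended real). -/
def Dcoef (d : ℕ) (t t' : ℝ) : ℝ≥0∞ :=
  ENNReal.ofReal |t - t'| ^ (-((d:ℝ) - 1))

/-!
In the time variable `(t - t₀)⁻¹` the direction of a line is its point at time `t₀`, so two lines
are parallel exactly when they meet at time `t₀`. Two applications of the Cauchy–Schwarz inequality,
first over the common direction and then over the pair formed by the point of one line at the time
of `t₁` and the point of the other at the time of `t₁'`, bound `|G|⁴`, up to the measures of slices,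
by the measure of the set of quadruples of lines: two pairs of parallel lines, of directions `ξ` and
`η`, that share such a pair of points. Fix the points `b`, `c` of the first pair at the times of
`t₂`, `t₂'`. For a suitable `r` the point of the third line at the time of `tinf` determines
`z = ξ - r η`, and by the cross-ratio condition, for the same `r`, the point of the fourth line at
time `0` is determined by `c` and `z`. In the original coordinates the lines through that point are
the lines of `G` of one direction, whose measure is at most `m(G)`.
-/

section FiberProduct

variable {α β : Type*}

/-- The fibre product `A ×_α A` of a set `A ⊆ α × β` over its first coordinate: the pairs of points
of `A` with a common first coordinate, recorded without repeating that coordinate. -/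
def fiberProduct (A : Set (α × β)) : Set (α × (β × β)) :=
  {p | (p.1, p.2.1) ∈ A ∧ (p.1, p.2.2) ∈ A}

lemma mk_preimage_fiberProduct (A : Set (α × β)) (x : α) :
    Prod.mk x ⁻¹' fiberProduct A = (Prod.mk x ⁻¹' A) ×ˢ (Prod.mk x ⁻¹' A) :=
  rfl

variable [MeasurableSpace β]

lemma support_measure_fiber_subset {ν : Measure β} {A : Set (α × β)} {S : Set α}
    (hS : Set.MapsTo Prod.fst A S) : (fun x => ν (Prod.mk x ⁻¹' A)).support ⊆ S := by
  intro x hx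
  obtain ⟨y, hy⟩ := nonempty_of_measure_ne_zero hx
  exact hS hy

variable [MeasurableSpace α]

lemma measurableSet_fiberProduct {A : Set (α × β)} (hA : MeasurableSet A) :
    MeasurableSet (fiberProduct A) := by
  have h₁ : Measurable fun p : α × (β × β) => (p.1, p.2.1) := by fun_prop
  have h₂ : Measurable fun p : α × (β × β) => (p.1, p.2.2) := by fun_prop
  exact (h₁ hA).inter (h₂ hA)

lemma sq_lintegral_le_measure_mul {μ : Measure α} {f : α → ℝ≥0∞} (hf : Measurable f) {S : Set α}
    (hS : f.support ⊆ S) : (∫⁻ x, f x ∂μ) ^ 2 ≤ μ S * ∫⁻ x, f x ^ 2 ∂μ := by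
  have hölder := ENNReal.lintegral_mul_le_Lp_mul_Lq (μ.restrict S) Real.HolderConjugate.two_two
    hf.aemeasurable (aemeasurable_const (b := 1))
  calc (∫⁻ x, f x ∂μ) ^ 2 = (∫⁻ x in S, f x ∂μ) ^ 2 := by
        rw [setLIntegral_eq_of_support_subset hS]
    _ ≤ ((∫⁻ x in S, f x ^ (2 : ℝ) ∂μ) ^ (1 / 2 : ℝ) * μ S ^ (1 / 2 : ℝ)) ^ 2 := by
        gcongr
        simpa using hölder
    _ = μ S * ∫⁻ x in S, f x ^ 2 ∂μ := by
        rw [mul_pow, ← ENNReal.rpow_mul_natCast, ← ENNReal.rpow_mul_natCast, mul_comm]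
        norm_num
    _ ≤ μ S * ∫⁻ x, f x ^ 2 ∂μ := by
        gcongr
        exact Measure.restrict_le_self

variable {μ : Measure α} {ν : Measure β} [SFinite ν]

theorem measure_prod_le_mul_of_fiber_le {A : Set (α × β)} (hA : MeasurableSet A) {S : Set α}
    (hS : Set.MapsTo Prod.fst A S) {c : ℝ≥0∞} (hc : ∀ x, ν (Prod.mk x ⁻¹' A) ≤ c) :
    μ.prod ν A ≤ μ S * c := by
  calc μ.prod ν A = ∫⁻ x in S, ν (Prod.mk x ⁻¹' A) ∂μ := by
        rw [Measure.prod_apply hA,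
          setLIntegral_eq_of_support_subset (support_measure_fiber_subset hS)]
    _ ≤ ∫⁻ _ in S, c ∂μ := lintegral_mono hc
    _ = μ S * c := by rw [setLIntegral_const, mul_comm]

theorem sq_measure_prod_le_mul_fiberProduct {A : Set (α × β)} (hA : MeasurableSet A) {S : Set α}
    (hS : Set.MapsTo Prod.fst A S) :
    μ.prod ν A ^ 2 ≤ μ S * μ.prod (ν.prod ν) (fiberProduct A) := by
  rw [Measure.prod_apply hA, Measure.prod_apply (measurableSet_fiberProduct hA)]
  simp only [mk_preimage_fiberProduct, Measure.prod_prod, ← sq]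
  exact sq_lintegral_le_measure_mul (measurable_measure_prodMk_left hA)
    (support_measure_fiber_subset hS)

theorem measurePreserving_shear {A : Type*} [AddGroup A] [MeasurableSpace A] [MeasurableAdd₂ A]
    {κ : Measure A} [SFinite κ] [κ.IsAddRightInvariant] {f : β → A} (hf : Measurable f) :
    MeasurePreserving (fun p : A × β => (p.1 + f p.2, p.2)) (κ.prod ν) (κ.prod ν) := by
  have hskew : MeasurePreserving (fun p : β × A => (p.1, p.2 + f p.1)) (ν.prod κ) (ν.prod κ) :=
    (MeasurePreserving.id ν).skew_product (g := fun y x => x + f y) (by fun_prop)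
      (.of_forall fun y => map_add_right_eq_self κ (f y))
  exact (Measure.measurePreserving_swap.comp hskew).comp Measure.measurePreserving_swap

end FiberProduct

section Slices

variable {E : Type*} [AddCommGroup E] [Module ℝ E]

/-- The slice `{x + tξ : (ξ,x) ∈ G}` of a set of lines in an arbitrary real vector space; on `Euc n`
it is definitionally `lineSlice`. -/
def slice (G : Set (E × E)) (t : ℝ) : Set E :=
  {y | ∃ w ∈ G, y = w.2 + t • w.1}

/-- The directions `ξ` of the lines of `G` that pass through the point `x` at time `s`. -/
def directionsThrough (G : Set (E × E)) (s : ℝ) (x : E) : Set E :=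
  {ξ | (ξ, x - s • ξ) ∈ G}

lemma lineSlice_eq_slice {n : ℕ} (G : Set (Euc n × Euc n)) (t : ℝ) : lineSlice G t = slice G t :=
  rfl

lemma mem_slice_of_mem {G : Set (E × E)} {ξ x y : E} (t : ℝ) (h : (ξ, x) ∈ G)
    (hy : x + t • ξ = y) : y ∈ slice G t :=
  ⟨(ξ, x), h, hy.symm⟩

lemma slice_mono {G G' : Set (E × E)} (h : G ⊆ G') (t : ℝ) : slice G t ⊆ slice G' t :=
  fun _ ⟨w, hw, hy⟩ => ⟨w, h hw, hy⟩

/-- The projective change of the time variable `t ↦ (t - t₀)⁻¹`, which exchanges the position at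
time `t₀` with the direction: `G` is replaced by its preimage, whose lines `(η, z)` have as
direction `η` the point at time `t₀`, and as position `z` the direction, of a line of `G`. -/
def recenter (t₀ : ℝ) (w : E × E) : E × E :=
  (w.2, w.1 - t₀ • w.2)

lemma mapsTo_fst_preimage_recenter (G : Set (E × E)) (t₀ : ℝ) :
    Set.MapsTo Prod.fst (recenter t₀ ⁻¹' G) (slice G t₀) :=
  fun _ hw => mem_slice_of_mem t₀ hw (sub_add_cancel _ _)

lemma slice_preimage_recenter_subset (G : Set (E × E)) {t₀ t : ℝ} (ht : t ≠ t₀) :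
    slice (recenter t₀ ⁻¹' G) (t - t₀)⁻¹ ⊆ ((t - t₀) • ·) ⁻¹' slice G t := by
  rintro _ ⟨w, hw, rfl⟩
  refine mem_slice_of_mem t hw ?_
  simp only [smul_add, smul_inv_smul₀ (sub_ne_zero.2 ht)]
  module

/-- The pairs of parallel lines of `G`, recorded as `((p, q), ξ)`, where `ξ` is the common
direction, `p` the point of the first line at time `u`, and `q` the point of the second line at
time `v`. -/
def parallelPairs (G : Set (E × E)) (u v : ℝ) : Set ((E × E) × E) :=
  {a | (a.2, a.1.1 - u • a.2) ∈ G ∧ (a.2, a.1.2 - v • a.2) ∈ G}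

lemma mapsTo_fst_parallelPairs (G : Set (E × E)) (u v : ℝ) :
    Set.MapsTo Prod.fst (parallelPairs G u v) (slice G u ×ˢ slice G v) :=
  fun _ ha => ⟨mem_slice_of_mem u ha.1 (sub_add_cancel _ _),
    mem_slice_of_mem v ha.2 (sub_add_cancel _ _)⟩

/-- Coordinates `((b, c), (z, η))` on the quadruples in `fiberProduct (parallelPairs G u₁ v₁)`,
which consist of two parallel lines of direction `z + r η` and two of direction `η`: here `b` and
`c` are the points of the former at the times `u₂` and `v₂`. -/
def quadrupleCoords (u₁ u₂ v₁ v₂ r : ℝ) (a : (E × E) × (E × E)) : (E × E) × (E × E) :=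
  let ξ := a.2.1 + r • a.2.2
  ((a.1.1 + (u₁ - u₂) • ξ, a.1.2 + (v₁ - v₂) • ξ), (ξ, a.2.2))

variable {G : Set (E × E)} {u₁ u₂ v₁ v₂ r : ℝ} {b c z η : E}

lemma mem_slices_of_quadrupleCoords_mem
    (h : quadrupleCoords u₁ u₂ v₁ v₂ r ((b, c), (z, η)) ∈ fiberProduct (parallelPairs G u₁ v₁)) :
    b ∈ slice G u₂ ∧ c ∈ slice G v₂ :=
  ⟨mem_slice_of_mem u₂ h.1.1 (by simp only [quadrupleCoords]; module),
    mem_slice_of_mem v₂ h.1.2 (by simp only [quadrupleCoords]; module)⟩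

lemma mem_slice_lineMap_of_quadrupleCoords_mem
    (h : quadrupleCoords u₁ u₂ v₁ v₂ r ((b, c), (z, η)) ∈ fiberProduct (parallelPairs G u₁ v₁)) :
    b + (u₁ - u₂) • z ∈ slice G (AffineMap.lineMap u₁ u₂ r) := by
  refine mem_slice_of_mem _ h.2.1 ?_
  simp only [quadrupleCoords, AffineMap.lineMap_apply_ring']
  module

lemma mem_directionsThrough_of_quadrupleCoords_mem
    (h : quadrupleCoords u₁ u₂ v₁ v₂ r ((b, c), (z, η)) ∈ fiberProduct (parallelPairs G u₁ v₁)) :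
    η ∈ directionsThrough G (AffineMap.lineMap v₁ v₂ r) (c + (v₁ - v₂) • z) := by
  convert h.2.2 using 2
  simp only [directionsThrough, Set.mem_ofPred_eq, quadrupleCoords, AffineMap.lineMap_apply_ring']
  congr! 2
  module

end Slices

section Estimate

open Module (finrank)

/-- With `t ↦ (t - t₀)⁻¹` as new time variable, the cross-ratio condition says that the affine map
carrying the times of `t₁, t₂` to those of `t₁', t₂'` carries the time of `tinf` to `0`. -/
lemma exists_lineMap_inv_sub_eq {t₁ t₁' t₂ t₂' t₀ tinf : ℝ} (h₁₂ : t₁ ≠ t₂) (h₀inf : t₀ ≠ tinf)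
    (h₀₁ : t₀ ≠ t₁) (h₀₁' : t₀ ≠ t₁') (h₀₂ : t₀ ≠ t₂) (h₀₂' : t₀ ≠ t₂') (hinf₁ : tinf ≠ t₁)
    (hinf₂ : tinf ≠ t₂)
    (hcross : (tinf - t₀) * (t₁ - t₀) / ((t₁ - tinf) * (t₁' - t₀)) =
      (tinf - t₀) * (t₂ - t₀) / ((t₂ - tinf) * (t₂' - t₀))) :
    ∃ r : ℝ, AffineMap.lineMap (t₁ - t₀)⁻¹ (t₂ - t₀)⁻¹ r = (tinf - t₀)⁻¹ ∧
      AffineMap.lineMap (t₁' - t₀)⁻¹ (t₂' - t₀)⁻¹ r = 0 := by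
  rw [← sub_ne_zero] at h₁₂
  rw [ne_comm, ← sub_ne_zero] at h₀inf h₀₁ h₀₁' h₀₂ h₀₂' hinf₁ hinf₂
  refine ⟨(t₂ - t₀) * (t₁ - tinf) / ((tinf - t₀) * (t₁ - t₂)), ?_, ?_⟩ <;>
    rw [AffineMap.lineMap_apply_ring']
  · field_simp
    ring
  · field_simp at hcross ⊢
    linear_combination -hcross

lemma Dcoef_succ (n : ℕ) {t t' : ℝ} (h : t ≠ t') :
    Dcoef (n + 1) t t' = ENNReal.ofReal |((t - t') ^ n)⁻¹| := by
  have hpos : 0 < |t - t'| := abs_pos.2 (sub_ne_zero.2 h)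
  rw [Dcoef, ENNReal.ofReal_rpow_of_pos hpos, Nat.cast_succ, add_sub_cancel_right,
    Real.rpow_neg hpos.le, Real.rpow_natCast, abs_inv, abs_pow]

lemma Dcoef_comm (d : ℕ) (t t' : ℝ) : Dcoef d t t' = Dcoef d t' t := by
  rw [Dcoef, Dcoef, abs_sub_comm]

lemma Dcoef_inv_mul_Dcoef_mul_Dcoef (n : ℕ) {t₀ t₁ t₂ : ℝ} (h₁ : t₁ ≠ t₀) (h₂ : t₂ ≠ t₀)
    (h₁₂ : t₁ ≠ t₂) :
    Dcoef (n + 1) (t₁ - t₀)⁻¹ (t₂ - t₀)⁻¹ * Dcoef (n + 1) t₁ t₀ * Dcoef (n + 1) t₂ t₀ =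
      Dcoef (n + 1) t₁ t₂ := by
  have hinv : (t₁ - t₀)⁻¹ ≠ (t₂ - t₀)⁻¹ := by simpa using h₁₂
  rw [Dcoef_succ n hinv, Dcoef_succ n h₁, Dcoef_succ n h₂, Dcoef_succ n h₁₂,
    ← ENNReal.ofReal_mul (abs_nonneg _), ← ENNReal.ofReal_mul (by positivity), ← abs_mul, ← abs_mul,
    ← mul_inv, ← mul_inv, ← mul_pow, ← mul_pow,
    inv_sub_inv (sub_ne_zero.2 h₁) (sub_ne_zero.2 h₂), mul_assoc,
    div_mul_cancel₀ _ (mul_ne_zero (sub_ne_zero.2 h₁) (sub_ne_zero.2 h₂)),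
    sub_sub_sub_cancel_right, abs_inv, abs_inv, abs_pow, abs_pow, abs_sub_comm]

variable {E : Type*} [NormedAddCommGroup E] [NormedSpace ℝ E] [MeasurableSpace E] [BorelSpace E]
  (μ : Measure E) [μ.IsAddHaarMeasure] {G : Set (E × E)}

lemma measure_directionsThrough_preimage_recenter (t₀ : ℝ) (x : E) :
    μ (directionsThrough (recenter t₀ ⁻¹' G) 0 x) = μ {y | (x, y) ∈ G} := by
  rw [← measure_preimage_add_right μ (-(t₀ • x)) {y | (x, y) ∈ G}]
  congr 1
  ext
  simp [directionsThrough, recenter, sub_eq_add_neg]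

variable [FiniteDimensional ℝ E]

lemma measure_preimage_add_sub_smul {t t' : ℝ} (h : t ≠ t') (b : E) (S : Set E) :
    μ ((fun z => b + (t - t') • z) ⁻¹' S) = Dcoef (finrank ℝ E + 1) t t' * μ S := by
  rw [Dcoef_succ _ h]
  change μ (((t - t') • ·) ⁻¹' ((b + ·) ⁻¹' S)) = _
  rw [Measure.addHaar_preimage_smul μ (sub_ne_zero.2 h), measure_preimage_add]

lemma measurePreserving_recenter (t₀ : ℝ) :
    MeasurePreserving (recenter t₀ : E × E → E × E) (μ.prod μ) (μ.prod μ) := by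
  have := Measure.measurePreserving_swap.comp
    (measurePreserving_shear (ν := μ) (κ := μ) (f := fun ξ => -(t₀ • ξ)) (by fun_prop))
  simp only [Function.comp_def, Prod.swap_prod_mk, ← sub_eq_add_neg] at this
  exact this

lemma measurePreserving_quadrupleCoords (u₁ u₂ v₁ v₂ r : ℝ) :
    MeasurePreserving (quadrupleCoords u₁ u₂ v₁ v₂ r : (E × E) × (E × E) → (E × E) × (E × E))
      ((μ.prod μ).prod (μ.prod μ)) ((μ.prod μ).prod (μ.prod μ)) := by
  have shear_z := measurePreserving_shear (ν := μ) (κ := μ) (f := fun η => r • η) (by fun_prop)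
  have shear_bc := measurePreserving_shear (ν := μ.prod μ) (κ := μ.prod μ)
    (f := fun a : E × E => ((u₁ - u₂) • a.1, (v₁ - v₂) • a.1)) (by fun_prop)
  exact shear_bc.comp ((MeasurePreserving.id (μ.prod μ)).prod shear_z)

lemma measurableSet_parallelPairs (hG : MeasurableSet G) (u v : ℝ) :
    MeasurableSet (parallelPairs G u v) := by
  have hu : Measurable fun a : (E × E) × E => (a.2, a.1.1 - u • a.2) := by fun_prop
  have hv : Measurable fun a : (E × E) × E => (a.2, a.1.2 - v • a.2) := by fun_prop
  exact (hu hG).inter (hv hG)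

lemma measure_parallelPairs (hG : MeasurableSet G) (u v : ℝ) :
    (μ.prod μ).prod μ (parallelPairs G u v) = μ.prod (μ.prod μ) (fiberProduct G) := by
  have hshear := Measure.measurePreserving_swap.comp
    (measurePreserving_shear (ν := μ) (κ := μ.prod μ) (f := fun ξ => (-(u • ξ), -(v • ξ)))
      (by fun_prop))
  rw [← hshear.measure_preimage (measurableSet_fiberProduct hG).nullMeasurableSet]
  simp only [parallelPairs, fiberProduct, Set.preimage_ofPred_eq, Function.comp_apply,
    sub_eq_add_neg, Prod.swap_prod_mk, Prod.fst_add, Prod.snd_add]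

theorem measure_fiberProduct_parallelPairs_le (hG : MeasurableSet G) {u₁ u₂ : ℝ} (hu : u₁ ≠ u₂)
    (v₁ v₂ r : ℝ) :
    (μ.prod μ).prod (μ.prod μ) (fiberProduct (parallelPairs G u₁ v₁)) ≤
      μ (slice G u₂) * μ (slice G v₂) *
        (Dcoef (finrank ℝ E + 1) u₁ u₂ * μ (slice G (AffineMap.lineMap u₁ u₂ r)) *
          ⨆ x, μ (directionsThrough G (AffineMap.lineMap v₁ v₂ r) x)) := by
  have hcoords := measurePreserving_quadrupleCoords μ u₁ u₂ v₁ v₂ r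
  have hmeas := measurableSet_fiberProduct (measurableSet_parallelPairs hG u₁ v₁)
  rw [← hcoords.measure_preimage hmeas.nullMeasurableSet, ← Measure.prod_prod]
  refine measure_prod_le_mul_of_fiber_le (hcoords.measurable hmeas)
    (fun _ ha => mem_slices_of_quadrupleCoords_mem ha) fun ⟨b, c⟩ => ?_
  rw [← measure_preimage_add_sub_smul μ hu b]
  refine measure_prod_le_mul_of_fiber_le (measurable_prodMk_left (hcoords.measurable hmeas))
    (fun _ ha => mem_slice_lineMap_of_quadrupleCoords_mem ha) fun z => ?_
  exact le_iSup_of_le (c + (v₁ - v₂) • z)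
    (measure_mono fun _ hη => mem_directionsThrough_of_quadrupleCoords_mem hη)

theorem measure_pow_four_le_of_mapsTo_fst (hG : MeasurableSet G) {S : Set E}
    (hS : Set.MapsTo Prod.fst G S) {u₁ u₂ : ℝ} (hu : u₁ ≠ u₂) (v₁ v₂ r : ℝ) :
    μ.prod μ G ^ 4 ≤
      Dcoef (finrank ℝ E + 1) u₁ u₂ * (⨆ x, μ (directionsThrough G (AffineMap.lineMap v₁ v₂ r) x)) *
        (μ S ^ 2 * μ (slice G u₁) * μ (slice G v₁) * μ (slice G u₂) * μ (slice G v₂) *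
          μ (slice G (AffineMap.lineMap u₁ u₂ r))) := by
  calc μ.prod μ G ^ 4 = (μ.prod μ G ^ 2) ^ 2 := by ring
    _ ≤ (μ S * (μ.prod μ).prod μ (parallelPairs G u₁ v₁)) ^ 2 := by
        rw [measure_parallelPairs μ hG]
        gcongr
        exact sq_measure_prod_le_mul_fiberProduct hG hS
    _ = μ S ^ 2 * (μ.prod μ).prod μ (parallelPairs G u₁ v₁) ^ 2 := mul_pow _ _ _
    _ ≤ μ S ^ 2 * (μ (slice G u₁) * μ (slice G v₁) *
          (μ.prod μ).prod (μ.prod μ) (fiberProduct (parallelPairs G u₁ v₁))) := by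
        rw [← Measure.prod_prod]
        gcongr
        exact sq_measure_prod_le_mul_fiberProduct (measurableSet_parallelPairs hG u₁ v₁)
          (mapsTo_fst_parallelPairs G u₁ v₁)
    _ ≤ _ := by
        grw [measure_fiberProduct_parallelPairs_le μ hG hu v₁ v₂ r]
        exact le_of_eq (by ring)

lemma measure_slice_preimage_recenter_le {t₀ t : ℝ} (ht : t ≠ t₀) :
    μ (slice (recenter t₀ ⁻¹' G) (t - t₀)⁻¹) ≤ Dcoef (finrank ℝ E + 1) t t₀ * μ (slice G t) := by
  have := measure_preimage_add_sub_smul μ ht 0 (slice G t)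
  simp only [zero_add] at this
  exact this ▸ measure_mono (slice_preimage_recenter_subset G ht)

theorem statement13_general {d : ℕ} (hd : finrank ℝ E + 1 = d) {t₁ t₁' t₂ t₂' t₀ tinf : ℝ}
    (h₁₂ : t₁ ≠ t₂) (h₀inf : t₀ ≠ tinf) (h₀₁ : t₀ ≠ t₁) (h₀₁' : t₀ ≠ t₁') (h₀₂ : t₀ ≠ t₂)
    (h₀₂' : t₀ ≠ t₂') (hinf₁ : tinf ≠ t₁) (hinf₂ : tinf ≠ t₂)
    (hcross : (tinf - t₀) * (t₁ - t₀) / ((t₁ - tinf) * (t₁' - t₀)) =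
      (tinf - t₀) * (t₂ - t₀) / ((t₂ - tinf) * (t₂' - t₀)))
    {G : Set (E × E)} (hG : NullMeasurableSet G (μ.prod μ)) :
    μ.prod μ G ^ 4 ≤
      Dcoef d t₁ t₂ * Dcoef d t₀ tinf * Dcoef d t₁' t₀ * Dcoef d t₂' t₀ *
        (⨆ ξ, μ {x | (ξ, x) ∈ G}) *
        (μ (slice G t₀) ^ 2 * μ (slice G t₁) * μ (slice G t₁') * μ (slice G t₂) *
          μ (slice G t₂') * μ (slice G tinf)) := by
  subst hd
  wlog hmeas : MeasurableSet G generalizing G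
  · obtain ⟨G', hsub, hG', hae⟩ := hG.exists_measurable_subset_ae_eq
    rw [← measure_congr hae]
    refine (this hG'.nullMeasurableSet hG').trans ?_
    have hfiber : ⨆ ξ, μ {x | (ξ, x) ∈ G'} ≤ ⨆ ξ, μ {x | (ξ, x) ∈ G} :=
      iSup_mono fun ξ => measure_mono fun _ hx => hsub hx
    gcongr <;> exact slice_mono hsub _
  obtain ⟨r, hr, hr'⟩ := exists_lineMap_inv_sub_eq h₁₂ h₀inf h₀₁ h₀₁' h₀₂ h₀₂' hinf₁ hinf₂ hcross
  have hrecenter := measurePreserving_recenter μ t₀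
  have hinv : (t₁ - t₀)⁻¹ ≠ (t₂ - t₀)⁻¹ := inv_injective.ne ((sub_left_injective (b := t₀)).ne h₁₂)
  have key := measure_pow_four_le_of_mapsTo_fst μ (hrecenter.measurable hmeas)
    (mapsTo_fst_preimage_recenter G t₀) hinv (t₁' - t₀)⁻¹ (t₂' - t₀)⁻¹ r
  simp only [hr, hr', measure_directionsThrough_preimage_recenter,
    hrecenter.measure_preimage hG] at key
  refine key.trans ?_
  grw [measure_slice_preimage_recenter_le μ h₀₁.symm,
    measure_slice_preimage_recenter_le μ h₀₁'.symm,
    measure_slice_preimage_recenter_le μ h₀₂.symm,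
    measure_slice_preimage_recenter_le μ h₀₂'.symm,
    measure_slice_preimage_recenter_le μ h₀inf.symm]
  rw [← Dcoef_inv_mul_Dcoef_mul_Dcoef (finrank ℝ E) h₀₁.symm h₀₂.symm h₁₂, Dcoef_comm _ t₀ tinf]
  exact le_of_eq (by ring)

end Estimate

lemma list_prod_map_le_biSup_pow_length {ι : Type*} (f : ι → ℝ≥0∞) {S : Set ι} {l : List ι}
    (hl : l ≠ []) (hlS : ∀ i ∈ l, i ∈ S) : (l.map f).prod ≤ ⨆ i ∈ S, f i ^ l.length := by
  rw [← ENNReal.iSup₂_pow_of_ne_zero _ (List.length_pos_of_ne_nil hl).ne', ← l.length_map f]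
  refine List.prod_le_pow_card _ _ ?_
  simpa only [List.forall_mem_map] using fun i hi => le_biSup f (hlS i hi)

/-- The six-slice estimate (Corollary 1):
`|G|⁴ ≲ D_{t₁,t₂} D_{t₀,t∞} D_{t₁',t₀} D_{t₂',t₀} m(G) sup_t ℒ^{d-1}(π_t(G))⁷`. -/
theorem statement13 (d : ℕ) (hd : 2 ≤ d) :
    ∃ K : ℝ, 0 < K ∧
      ∀ t₁ t₁' t₂ t₂' t₀ tinf : ℝ,
        t₁ ≠ t₂ →
        t₀ ≠ tinf → t₀ ≠ t₁ → t₀ ≠ t₁' → t₀ ≠ t₂ → t₀ ≠ t₂' →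
        tinf ≠ t₁ → tinf ≠ t₂ →
        (tinf - t₀) * (t₁ - t₀) / ((t₁ - tinf) * (t₁' - t₀)) =
          (tinf - t₀) * (t₂ - t₀) / ((t₂ - tinf) * (t₂' - t₀)) →
        ∀ G : Set (Euc (d - 1) × Euc (d - 1)), MeasurableSet G →
          volume G ≠ ⊤ → mG G ≠ ⊤ →
          (∀ t ∈ ({tinf, t₀, t₁, t₁', t₂, t₂'} : Set ℝ), volume (lineSlice G t) ≠ ⊤) →
          volume G ^ 4 ≤
            ENNReal.ofReal K * Dcoef d t₁ t₂ * Dcoef d t₀ tinf *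
              Dcoef d t₁' t₀ * Dcoef d t₂' t₀ * mG G *
              ⨆ t ∈ ({tinf, t₀, t₁, t₁', t₂, t₂'} : Set ℝ), volume (lineSlice G t) ^ 7 := by
  refine ⟨1, one_pos, fun t₁ t₁' t₂ t₂' t₀ tinf h₁₂ h₀inf h₀₁ h₀₁' h₀₂ h₀₂' hinf₁ hinf₂ hcross
    G hG _ _ _ => ?_⟩
  have hprod := list_prod_map_le_biSup_pow_length (fun t => volume (lineSlice G t))
    (S := {tinf, t₀, t₁, t₁', t₂, t₂'}) (l := [t₀, t₀, t₁, t₁', t₂, t₂', tinf]) (by simp) (by simp)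
  rw [ENNReal.ofReal_one, one_mul]
  refine (statement13_general volume (by simp; omega) h₁₂ h₀inf h₀₁ h₀₁' h₀₂ h₀₂' hinf₁ hinf₂ hcross
    hG.nullMeasurableSet).trans (mul_le_mul_right ?_ _)
  simpa [← lineSlice_eq_slice, sq, mul_assoc] using hprod

end
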